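/- There exists a class of languages that is learnable by a monotone behaviorally correct full-information learner from informants but not by any cautious behaviorally correct full-information learner from informants: [Inf G Mon Bc] \ [Inf G Caut Bc] ≠ ∅. -/

import Mathlib

open Filter Classical

namespace InfBc

/-! ### Basic notions: r.e. sets, informants, learners -/

/-- The `e`-th recursively enumerable set (via an acceptable numbering of
partial computable functions, `W e = dom φ_e`). -/
def W (e : ℕ) : Set ℕ := {x | ((Denumerable.ofNat Nat.Partrec.Code e).eval x).Dom}

/-- A language is recursively enumerable. -/
def RE (L : Set ℕ) : Prop := ∃ e, W e = L

abbrev Datum := ℕ × Bool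
abbrev Seq := List Datum
abbrev Informant := ℕ → Datum
abbrev HypSeq := ℕ → Part ℕ
/-- Learners are partial functions; all input types are coded into `ℕ`. -/
abbrev Learner := ℕ →. ℕ
abbrev Restriction := HypSeq → Informant → Prop

/-- Positive information of an infinite sequence. -/
def posI (I : Informant) : Set ℕ := {x | ∃ n, I n = (x, true)}
/-- Negative information of an infinite sequence. -/
def negI (I : Informant) : Set ℕ := {x | ∃ n, I n = (x, false)}

/-- `I` is an informant for the language `L`. -/
def IsInformant (I : Informant) (L : Set ℕ) : Prop := posI I = L ∧ negI I = Lᶜ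

/-- `I` is an informant (for some language), i.e. `I ∈ Inf`. -/
def IsInf (I : Informant) : Prop := IsInformant I (posI I)

/-- `I` is a canonical informant. -/
def Canonical (I : Informant) : Prop := ∀ x, I x = (x, true) ∨ I x = (x, false)

/-- `I[n]`, the length-`n` initial segment of `I`. -/
def segment (I : Informant) (n : ℕ) : Seq := (List.range n).map I

/-- Positive information of a finite sequence. -/
def posS (σ : Seq) : Set ℕ := {x | (x, true) ∈ σ}
/-- Negative information of a finite sequence. -/
def negS (σ : Seq) : Set ℕ := {x | (x, false) ∈ σ}
/-- The content of a finite sequence, as a set. -/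
def contentS (σ : Seq) : Set Datum := {a | a ∈ σ}

/-! ### Interaction operators -/

abbrev InteractionOperator := Learner → Informant → HypSeq

/-- Full-information (Gold-style) interaction: `G(h,I)(i) = h(I[i])`. -/
def Gop : InteractionOperator := fun h I i => h (Encodable.encode (segment I i))

/-- Set-driven interaction: `Sd(h,I)(i) = h(content(I[i]))`. -/
def Sdop : InteractionOperator := fun h I i => h (Encodable.encode (segment I i).toFinset)

/-- The iterated evaluation of an iterative learner on a finite sequence:
start with the initial hypothesis `h(none)` and feed the data one by one. -/
def iterExtend (h : Learner) (σ : Seq) : Part ℕ :=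
  σ.foldl (fun pe a => pe.bind fun e => h (Encodable.encode (some (e, a))))
    (h (Encodable.encode (none : Option (ℕ × Datum))))

/-- Iterative interaction: `It(h,I)(i)` is obtained by feeding `I[i]` one datum
at a time, each time updating the previous hypothesis. -/
def Itop : InteractionOperator := fun h I i => iterExtend h (segment I i)

/-- An iterative learner is confluent if the order and multiplicity in which
the content is presented does not matter. -/
def ConfluentLearner (h : Learner) : Prop :=
  ∀ σ τ : Seq, contentS σ = contentS τ → iterExtend h σ = iterExtend h τ

/-- Confluently iterative interaction. -/
noncomputable def CflItop : InteractionOperator := fun h I i =>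
  if ConfluentLearner h then iterExtend h (segment I i) else Part.none

/-- `β ≼ β'`: every (partial computable) `β`-learner can be translated into a
`β'`-learner with the same hypothesis sequence on every informant. -/
def OpLe (β β' : InteractionOperator) : Prop :=
  ∀ h : Learner, Partrec h → ∃ h' : Learner, Partrec h' ∧
    ∀ I : Informant, IsInf I → ∀ n, β h I n = β' h' I n

/-! ### Learning restrictions -/

/-- The trivial restriction `T`. -/
def TT : Restriction := fun _ _ => True

/-- Explanatory identification. -/
def Ex : Restriction := fun p I =>
  ∃ q, W q = posI I ∧ ∀ᶠ n in atTop, p n = Part.some q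

/-- Behaviorally correct identification. -/
def Bc : Restriction := fun p I => ∀ᶠ n in atTop, ∃ e ∈ p n, W e = posI I

/-- Consistency of a hypothesis with a finite sequence of data. -/
def ConsH (e : ℕ) (σ : Seq) : Prop := posS σ ⊆ W e ∧ negS σ ∩ W e = ∅

/-- Consistency of a hypothesis sequence with an informant. -/
def Cons : Restriction := fun p I => ∀ n, ∃ e ∈ p n, ConsH e (segment I n)

/-- Strongly monotone. -/
def SMon : Restriction := fun p _ =>
  ∀ s t, s ≤ t → ∀ e ∈ p s, ∀ e' ∈ p t, W e ⊆ W e'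

/-- Dual strongly monotone. -/
def SMond : Restriction := fun p _ =>
  ∀ s t, s ≤ t → ∀ e ∈ p s, ∀ e' ∈ p t, W e' ⊆ W e

/-- Monotone. -/
def Mon : Restriction := fun p I =>
  ∀ s t, s ≤ t → ∀ e ∈ p s, ∀ e' ∈ p t, W e ∩ posI I ⊆ W e' ∩ posI I

/-- Dual monotone. -/
def Mond : Restriction := fun p I =>
  ∀ s t, s ≤ t → ∀ e ∈ p s, ∀ e' ∈ p t, (W e)ᶜ ∩ negI I ⊆ (W e')ᶜ ∩ negI I

/-- Weakly monotone. -/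
def WMon : Restriction := fun p I =>
  ∀ s t, s ≤ t → ∀ e ∈ p s, ConsH e (segment I t) → ∀ e' ∈ p t, W e ⊆ W e'

/-- Dual weakly monotone. -/
def WMond : Restriction := fun p I =>
  ∀ s t, s ≤ t → ∀ e ∈ p s, ConsH e (segment I t) → ∀ e' ∈ p t, W e' ⊆ W e

/-- Cautious. -/
def Caut : Restriction := fun p _ =>
  ∀ s t, s < t → ∀ e ∈ p s, ∀ e' ∈ p t, ¬ W e' ⊂ W e

/-- Target cautious. -/
def CautTar : Restriction := fun p I =>
  ∀ s, ∀ e ∈ p s, ¬ posI I ⊂ W e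

/-- Finitely cautious. -/
def CautFin : Restriction := fun p _ =>
  ∀ s t, s < t → ∀ e ∈ p s, ∀ e' ∈ p t, W e' ⊂ W e → (W e').Infinite

/-- Infinitely cautious. -/
def CautInf : Restriction := fun p _ =>
  ∀ s t, s < t → ∀ e ∈ p s, ∀ e' ∈ p t, W e' ⊂ W e → (W e').Finite

/-! ### Learnability -/

/-- The class of admissible learners: all partial computable learners. -/
def AllL : Learner → Prop := fun _ => True
/-- The class of admissible learners: total computable learners (`ℛ`). -/
def TotalL : Learner → Prop := fun h => ∀ x, (h x).Dom
/-- Admissible informants: all informants (`Inf`). -/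
def AllI : Informant → Prop := fun _ => True

/-- `h` learns `L` in the setting given by admissible informants `P`,
interaction operator `β` and local restriction `δ`. -/
def LearnsWith (P : Informant → Prop) (β : InteractionOperator) (δ : Restriction)
    (h : Learner) (L : Set ℕ) : Prop :=
  RE L ∧ ∀ I : Informant, P I → IsInformant I L → δ (β h I) I

/-- `[τ(α) C P β δ]`: the collection of all classes of languages learnable by
some learner in `C` that satisfies the global restriction `α` on all admissible
informants, under interaction operator `β` and local restriction `δ`. -/
def Learnable (α : Restriction) (C : Learner → Prop) (P : Informant → Prop)
    (β : InteractionOperator) (δ : Restriction) : Set (Set (Set ℕ)) :=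
  {𝓛 | ∃ h : Learner, Partrec h ∧ C h ∧
        (∀ I : Informant, IsInf I → P I → α (β h I) I) ∧
        ∀ L ∈ 𝓛, LearnsWith P β δ h L}

/-! ### Properties of restrictions -/

/-- A learning restriction is delayable if it is preserved under postponing
hypotheses along a non-decreasing unbounded function. -/
def Delayable (δ : Restriction) : Prop :=
  ∀ I I' : Informant, IsInf I → IsInf I' → Set.range I = Set.range I' →
    ∀ (p : HypSeq) (s : ℕ → ℕ), Monotone s → (∀ m, ∃ n, m ≤ s n) →
      δ p I → (∀ n, contentS (segment I (s n)) ⊆ contentS (segment I' n)) →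
      δ (fun n => p (s n)) I'

/-- A learning restriction is semantic if it is indifferent to replacing the
hypothesis sequence by a semantically equivalent one. -/
def Semantic (δ : Restriction) : Prop :=
  ∀ (p p' : HypSeq) (I : Informant), δ p I →
    (∀ i, (p i).Dom ↔ (p' i).Dom) →
    (∀ i, ∀ e ∈ p i, ∀ e' ∈ p' i, W e = W e') →
    δ p' I


/-!
The cofinite languages separate the two settings. The learner that always conjectures the complement
of its negative data never drops an element of the target, and it converges as soon as the finitely
many negative data have shown up. A cautious learner, in contrast, conjectures `ℕ` after some finite
part of the data for `ℕ`. This part leaves a number `x` undecided, so it also starts an informant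
for `{x}ᶜ ⊂ ℕ`, on which the learner can never shrink its conjecture to the target.
-/

section RecursivelyEnumerable

variable {α : Type*} [Primcodable α]

theorem mem_W_encode {c : Nat.Partrec.Code} {x : ℕ} :
    x ∈ W (Encodable.encode c) ↔ (c.eval x).Dom := by
  rw [W, Set.mem_ofPred_eq, Denumerable.ofNat_encode]

-- The s-m-n theorem: freeze the index argument of a single code for the whole family.
theorem exists_computable_W_eq {S : α → Set ℕ} (hS : REPred fun p : α × ℕ => p.2 ∈ S p.1) :
    ∃ f : α → ℕ, Computable f ∧ ∀ a, W (f a) = S a := by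
  obtain ⟨c, hc⟩ := Nat.Partrec.Code.exists_code.1 hS
  refine ⟨fun a => Encodable.encode (c.curry (Encodable.encode a)), ?_, fun a => ?_⟩
  · exact (Primrec.encode.comp
      (Nat.Partrec.Code.primrec₂_curry.comp (Primrec.const c) Primrec.encode)).to_comp
  · ext x
    have eval_pair : c.eval (Nat.pair (Encodable.encode a) x) =
        (Part.assert (x ∈ S a) fun _ => Part.some ()).map Encodable.encode := by
      have encode_pair : Nat.pair (Encodable.encode a) x = Encodable.encode (a, x) := rfl
      simp only [hc, encode_pair, Encodable.encodek, Part.coe_some, Part.bind_some]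
    rw [mem_W_encode, Nat.Partrec.Code.eval_curry, eval_pair]
    simp [Part.assert]

theorem primrecRel_mem_list : PrimrecRel fun (l : List α) (a : α) => a ∈ l :=
  Primrec.eq.exists_mem_list.of_eq fun _ _ => exists_eq_right

theorem exists_computable_W_eq_compl_negS :
    ∃ f : Seq → ℕ, Computable f ∧ ∀ σ, W (f σ) = (negS σ)ᶜ := by
  have primrec_notMem : PrimrecPred fun p : Seq × ℕ => (p.2, false) ∉ p.1 :=
    (primrecRel_mem_list.comp Primrec.fst (Primrec.snd.pair (Primrec.const false))).not
  exact exists_computable_W_eq primrec_notMem.computablePred.to_re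

end RecursivelyEnumerable

section Informants

variable {I : Informant} {L L' : Set ℕ} {n : ℕ}

theorem mem_segment {a : Datum} : a ∈ segment I n ↔ ∃ m < n, I m = a := by
  simp [segment]

theorem negS_segment_subset_negI : negS (segment I n) ⊆ negI I := fun _ hx =>
  let ⟨m, _, hm⟩ := mem_segment.1 hx
  ⟨m, hm⟩

theorem eventually_mem_negS_segment {x : ℕ} (hx : x ∈ negI I) :
    ∀ᶠ n in atTop, x ∈ negS (segment I n) := by
  obtain ⟨m, hm⟩ := hx
  filter_upwards [eventually_gt_atTop m] with n hmn
  exact mem_segment.2 ⟨m, hmn, hm⟩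

theorem eventually_negS_segment_eq (hfin : (negI I).Finite) :
    ∀ᶠ n in atTop, negS (segment I n) = negI I := by
  filter_upwards [(eventually_all_finite hfin).2 fun _ => eventually_mem_negS_segment]
    with n hn
  exact negS_segment_subset_negI.antisymm hn

/-- The informant for `L` that presents the numbers in their natural order. -/
noncomputable def canonicalInformant (L : Set ℕ) : Informant := fun x => (x, decide (x ∈ L))

theorem isInformant_canonicalInformant (L : Set ℕ) : IsInformant (canonicalInformant L) L := by
  constructor <;> ext <;> simp [posI, negI, canonicalInformant]

theorem canonical_canonicalInformant (L : Set ℕ) : Canonical (canonicalInformant L) := fun x => by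
  by_cases hx : x ∈ L <;> simp [canonicalInformant, hx]

theorem segment_canonicalInformant_congr (h : ∀ x < n, x ∈ L ↔ x ∈ L') :
    segment (canonicalInformant L) n = segment (canonicalInformant L') n :=
  List.map_congr_left fun x hx => by
    simp only [canonicalInformant, h x (List.mem_range.1 hx)]

end Informants

section Restrictions

variable {p : HypSeq} {I : Informant}

theorem mon_of_posI_subset (h : ∀ n, ∀ e ∈ p n, posI I ⊆ W e) : Mon p I :=
  fun _ t _ _ _ e' he' _ hx => ⟨h t e' he' hx.2, hx.2⟩

theorem Bc.re_posI (h : Bc p I) : RE (posI I) :=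
  let ⟨_, e, _, he⟩ := h.exists
  ⟨e, he⟩

theorem Bc.not_posI_ssubset_of_caut (hBc : Bc p I) (hCaut : Caut p I) {n e : ℕ} (he : e ∈ p n) :
    ¬ posI I ⊂ W e := by
  obtain ⟨t, ⟨e', he', hWe'⟩, hnt⟩ := (hBc.and (eventually_gt_atTop n)).exists
  exact hWe' ▸ hCaut n t hnt e he e' he'

end Restrictions

section Learners

variable {P : Informant → Prop} {C : Learner → Prop} {α δ : Restriction} {f : Seq → ℕ}
  {I : Informant} {𝓛 : Set (Set ℕ)}

theorem learnable_subset_allL {β : InteractionOperator} :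
    Learnable α C P β δ ⊆ Learnable α AllL P β δ :=
  fun _ ⟨h, hpart, _, hα, hlearn⟩ => ⟨h, hpart, trivial, hα, hlearn⟩

/-- The total learner whose hypothesis after the data `σ` is `f σ`. Numbers that code no
sequence are read as the empty one. -/
def learnerOfFun (f : Seq → ℕ) : Learner := fun n =>
  Part.some (f ((Encodable.decode (α := Seq) n).getD []))

theorem partrec_learnerOfFun (hf : Computable f) : Partrec (learnerOfFun f) :=
  hf.comp (Computable.option_getD Computable.decode (Computable.const []))

theorem gop_learnerOfFun (n : ℕ) : Gop (learnerOfFun f) I n = Part.some (f (segment I n)) := by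
  rw [Gop, learnerOfFun, Encodable.encodek, Option.getD_some]

theorem mon_gop_learnerOfFun_of_W_eq_compl_negS (hW : ∀ σ, W (f σ) = (negS σ)ᶜ)
    (hI : IsInf I) : Mon (Gop (learnerOfFun f) I) I := by
  refine mon_of_posI_subset fun n e he => ?_
  rw [gop_learnerOfFun, Part.mem_some_iff] at he
  rw [he, hW, Set.subset_compl_comm, ← hI.2]
  exact negS_segment_subset_negI

theorem bc_gop_learnerOfFun_of_W_eq_compl_negS (hW : ∀ σ, W (f σ) = (negS σ)ᶜ)
    (hI : IsInf I) (hfin : (negI I).Finite) : Bc (Gop (learnerOfFun f) I) I := by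
  filter_upwards [eventually_negS_segment_eq hfin] with n hn
  refine ⟨f (segment I n), gop_learnerOfFun n ▸ Part.mem_some _, ?_⟩
  rw [hW, hn, hI.2, compl_compl]

theorem cofinite_mem_learnable_mon_bc :
    {L : Set ℕ | Lᶜ.Finite} ∈ Learnable TT TotalL P Gop (fun p I => Mon p I ∧ Bc p I) := by
  obtain ⟨f, hf, hW⟩ := exists_computable_W_eq_compl_negS
  have learns : ∀ L : Set ℕ, Lᶜ.Finite → ∀ I, IsInformant I L →
      Mon (Gop (learnerOfFun f) I) I ∧ Bc (Gop (learnerOfFun f) I) I := by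
    rintro _ hfin I ⟨rfl, hneg⟩
    have hI : IsInf I := ⟨rfl, hneg⟩
    exact ⟨mon_gop_learnerOfFun_of_W_eq_compl_negS hW hI,
      bc_gop_learnerOfFun_of_W_eq_compl_negS hW hI (hneg ▸ hfin)⟩
  refine ⟨learnerOfFun f, partrec_learnerOfFun hf, fun _ => trivial, fun _ _ _ => trivial,
    fun L hL => ⟨?_, fun I _ => learns L hL I⟩⟩
  have hI := isInformant_canonicalInformant L
  exact hI.1 ▸ (learns L hL _ hI).2.re_posI

theorem notMem_learnable_caut_bc_of_forall_exists_ssubset {L : Set ℕ}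
    (hP : ∀ I, Canonical I → P I) (hL : L ∈ 𝓛)
    (hsub : ∀ n, ∃ L' ∈ 𝓛, L' ⊂ L ∧ ∀ x < n, x ∈ L' ↔ x ∈ L) :
    𝓛 ∉ Learnable α C P Gop (fun p I => Caut p I ∧ Bc p I) := by
  rintro ⟨h, -, -, -, hlearn⟩
  have learns : ∀ K ∈ 𝓛, Caut (Gop h (canonicalInformant K)) (canonicalInformant K) ∧
      Bc (Gop h (canonicalInformant K)) (canonicalInformant K) := fun K hK =>
    (hlearn K hK).2 _ (hP _ (canonical_canonicalInformant K)) (isInformant_canonicalInformant K)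
  obtain ⟨n, e, he, hWe⟩ := (learns L hL).2.exists
  obtain ⟨L', hL', hss, hagree⟩ := hsub n
  obtain ⟨hCaut, hBc⟩ := learns L' hL'
  have he' : e ∈ Gop h (canonicalInformant L') n := by
    rwa [Gop, segment_canonicalInformant_congr hagree]
  refine hBc.not_posI_ssubset_of_caut hCaut he' ?_
  rwa [hWe, (isInformant_canonicalInformant L).1, (isInformant_canonicalInformant L').1]

theorem cofinite_notMem_learnable_caut_bc (hP : ∀ I, Canonical I → P I) :
    {L : Set ℕ | Lᶜ.Finite} ∉ Learnable α C P Gop (fun p I => Caut p I ∧ Bc p I) := by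
  refine notMem_learnable_caut_bc_of_forall_exists_ssubset (L := Set.univ) hP (by simp)
    fun n => ⟨{n}ᶜ, by simp, ?_, fun x hx => by simp [hx.ne]⟩
  simp [Set.ssubset_univ_iff]

end Learners

/-- `[Inf G Mon Bc] \ [Inf G Caut Bc] ≠ ∅`. -/
theorem caut_proper :
    (Learnable TT AllL AllI Gop (fun p I => Mon p I ∧ Bc p I) \
      Learnable TT AllL AllI Gop (fun p I => Caut p I ∧ Bc p I)).Nonempty := by
  exact ⟨{L | Lᶜ.Finite}, learnable_subset_allL cofinite_mem_learnable_mon_bc,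
    cofinite_notMem_learnable_caut_bc fun _ _ => trivial⟩

end InfBc
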